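/- arXiv:1812.11363 — 2 statements merged into one kernel-verified Lean document; each statement's English description precedes it below -/
import Mathlib

section
/- Every element of order 2 (or 1) in S₆ acting on the set Q of partitions of {1,...,6} into two blocks of size 3 has at least one fixed point. -/
open Pointwise

/-- A partition of {1,...,6} into two (unordered) blocks of size 3. -/
def IsTriplePartition (q : Finset (Finset (Fin 6))) : Prop :=
  q.card = 2 ∧ (∀ b ∈ q, b.card = 3) ∧ q.sup id = Finset.univ

theorem exists_block (g : Equiv.Perm (Fin 6)) (hg : ∀ x, g (g x) = x) :
    ∃ b : Finset (Fin 6), b.card = 3 ∧ (g • b = b ∨ g • b = bᶜ) := by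
  have hinv : ∀ x, g⁻¹ x = g x := fun x => by
    rw [Equiv.Perm.inv_eq_iff_eq, hg]
  by_cases hfix : ∃ a, g a = a
  · obtain ⟨a, ha⟩ := hfix
    by_cases hm : ∃ x, g x ≠ x
    · obtain ⟨x, hx⟩ := hm
      have hax : a ≠ x := by rintro rfl; exact hx ha
      have hagx : a ≠ g x := by
        intro h
        apply hax
        rw [← hg x, ← h, ha]
      refine ⟨{a, x, g x}, Finset.card_eq_three.2 ⟨a, x, g x, hax, hagx, hx.symm, rfl⟩, Or.inl ?_⟩
      simp only [Finset.smul_finset_insert, Finset.smul_finset_singleton, Equiv.Perm.smul_def, ha, hg]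
      rw [Finset.pair_comm]
    · push Not at hm
      have : g = 1 := Equiv.ext hm
      subst this
      exact ⟨{0, 1, 2}, rfl, Or.inl (one_smul _ _)⟩
  · push Not at hfix
    have hs : g • (Finset.univ.filter fun x => x < g x) = (Finset.univ.filter fun x => x < g x)ᶜ := by
      ext x
      rw [← Finset.inv_smul_mem_iff]
      have := hfix x
      simp only [Equiv.Perm.smul_def, hinv, Finset.mem_filter, Finset.mem_univ, true_and, hg,
        Finset.mem_compl, not_lt]
      exact ⟨le_of_lt, fun h => lt_of_le_of_ne h this⟩
    refine ⟨_, ?_, Or.inr hs⟩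
    have hc := congrArg Finset.card hs
    rw [Finset.card_smul_finset, Finset.card_compl, Fintype.card_fin] at hc
    omega

/-- Every element of order 2 (or 1) of S₆ fixes some partition of {1,...,6}
into two triples. -/
theorem involution_fixes_a_triple_partition (g : Equiv.Perm (Fin 6)) (hg : g ^ 2 = 1) :
    ∃ q : Finset (Finset (Fin 6)), IsTriplePartition q ∧ g • q = q := by
  have hg' : ∀ x, g (g x) = x := fun x => by
    have := Equiv.ext_iff.1 hg x
    simpa [pow_two] using this
  obtain ⟨b, hb, h⟩ := exists_block g hg'
  have hbc : bᶜ.card = 3 := by rw [Finset.card_compl, Fintype.card_fin, hb]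
  have hne : b ≠ bᶜ := by
    intro e
    have hd : Disjoint b bᶜ := disjoint_compl_right
    rw [← e, disjoint_self] at hd
    rw [hd] at hb
    simp at hb
  have hcompl : g • bᶜ = (g • b)ᶜ := by
    ext x
    simp only [← Finset.inv_smul_mem_iff, Finset.mem_compl]
  refine ⟨{b, bᶜ}, ⟨Finset.card_pair hne, ?_, ?_⟩, ?_⟩
  · intro c hc
    rw [Finset.mem_insert, Finset.mem_singleton] at hc
    rcases hc with rfl | rfl <;> assumption
  · simp
  · rw [Finset.smul_finset_insert, Finset.smul_finset_singleton, hcompl]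
    rcases h with h | h
    · rw [h]
    · rw [h, compl_compl, Finset.pair_comm]
end

section
/- Let H ≤ S₆ be the image of an embedding S₅ ↪ S₆ that is not conjugate to the standard point-stabilizer embedding (i.e., H acts transitively on {1,...,6}). Then H acting on the 15-element set P of partitions of {1,...,6} into three pairs has exactly two orbits, of sizes 5 and 10. -/
open Pointwise

/-- A partition of {1,...,6} into three (unordered) pairs. -/
def IsPairPartition (p : Finset (Finset (Fin 6))) : Prop :=
  p.card = 3 ∧ (∀ b ∈ p, b.card = 2) ∧ p.sup id = Finset.univ

namespace NonstdS5

/-- The pair partitions as an explicit finset. -/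
def pps : Finset (Finset (Finset (Fin 6))) :=
  (Finset.powersetCard 3 (Finset.powersetCard 2 Finset.univ)).filter
    (fun p => p.sup id = Finset.univ)

theorem mem_pps (p : Finset (Finset (Fin 6))) : p ∈ pps ↔ IsPairPartition p := by
  unfold pps IsPairPartition
  simp only [Finset.mem_filter, Finset.mem_powersetCard, Finset.subset_iff, Finset.mem_univ]
  constructor
  · rintro ⟨⟨h1, h2⟩, h3⟩
    exact ⟨h2, fun b hb => (h1 hb).2, h3⟩
  · rintro ⟨h1, h2, h3⟩
    exact ⟨⟨fun b hb => ⟨fun _ _ => trivial, h2 b hb⟩, h1⟩, h3⟩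

theorem smul_pp (g : Equiv.Perm (Fin 6)) (p : Finset (Finset (Fin 6)))
    (hp : IsPairPartition p) : IsPairPartition (g • p) := by
  obtain ⟨h1, h2, h3⟩ := hp
  refine ⟨by rw [Finset.card_smul_finset, h1], ?_, ?_⟩
  · intro b hb
    obtain ⟨a, ha, rfl⟩ := Finset.mem_smul_finset.1 hb
    rw [Finset.card_smul_finset, h2 a ha]
  · ext x
    simp only [Finset.mem_univ, iff_true]
    have hx : g⁻¹ • x ∈ p.sup id := by rw [h3]; exact Finset.mem_univ _
    rw [Finset.mem_sup] at hx ⊢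
    obtain ⟨b, hb, hxb⟩ := hx
    exact ⟨g • b, Finset.smul_mem_smul_finset hb, Finset.mem_smul_finset.2
      ⟨g⁻¹ • x, hxb, smul_inv_smul g x⟩⟩

/-- The 5-cycle (0 1 2 3 4) on six points. -/
def c0 : Equiv.Perm (Fin 6) :=
  ⟨![1, 2, 3, 4, 0, 5], ![4, 0, 1, 2, 3, 5], by decide, by decide⟩

/-- The triple transposition (0 1)(2 3)(4 5). -/
def t0 : Equiv.Perm (Fin 6) :=
  ⟨![1, 0, 3, 2, 5, 4], ![1, 0, 3, 2, 5, 4], by decide, by decide⟩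

/-- Base point of the short orbit. -/
def P1 : Finset (Finset (Fin 6)) := {{0, 1}, {2, 4}, {3, 5}}

/-- Base point of the long orbit. -/
def P2 : Finset (Finset (Fin 6)) := {{0, 1}, {2, 3}, {4, 5}}

/-- Some words in the two generators. -/
def W : Finset (Equiv.Perm (Fin 6)) :=
  (Finset.univ : Finset (Fin 5)).image (fun i : Fin 5 => c0 ^ (i : ℕ)) ∪
  (Finset.univ : Finset (Fin 5 × Fin 5)).image
    (fun i : Fin 5 × Fin 5 => c0 ^ (i.1 : ℕ) * t0 * c0 ^ (i.2 : ℕ))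

def O1 : Finset (Finset (Finset (Fin 6))) := W.image (fun w => w • P1)

def O2 : Finset (Finset (Finset (Fin 6))) := W.image (fun w => w • P2)

theorem P1_mem : P1 ∈ pps := by decide +kernel
theorem P2_mem : P2 ∈ pps := by decide +kernel
theorem P1_mem' : P1 ∈ O1 := by decide +kernel
theorem P2_mem' : P2 ∈ O2 := by decide +kernel
theorem card_O1 : O1.card = 5 := by decide +kernel
theorem card_O2 : O2.card = 10 := by decide +kernel
theorem card_pps : pps.card = 15 := by decide +kernel
theorem card_O12 : (O1 ∪ O2).card = 15 := by decide +kernel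
theorem sub_pps : ∀ p ∈ O1 ∪ O2, p ∈ pps := by
  intro p hp
  rw [mem_pps]
  rcases Finset.mem_union.1 hp with h | h
  · obtain ⟨w, -, rfl⟩ := Finset.mem_image.1 h
    exact smul_pp w _ ((mem_pps _).1 P1_mem)
  · obtain ⟨w, -, rfl⟩ := Finset.mem_image.1 h
    exact smul_pp w _ ((mem_pps _).1 P2_mem)
theorem cover : ∀ p ∈ pps, p ∈ O1 ∨ p ∈ O2 := by
  intro p hp
  rw [← Finset.eq_of_subset_of_card_le sub_pps (by rw [card_pps, card_O12])] at hp
  exact Finset.mem_union.1 hp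
theorem c0_O1 : c0 • O1 = O1 := by decide +kernel
theorem t0_O1 : t0 • O1 = O1 := by decide +kernel
theorem c0_O2 : c0 • O2 = O2 := by decide +kernel
theorem t0_O2 : t0 • O2 = O2 := by decide +kernel

set_option synthInstance.maxHeartbeats 400000 in
set_option synthInstance.maxSize 100000 in
theorem find_t : ∀ t : Equiv.Perm (Fin 6), t 5 ≠ 5 → t * t = 1 → (t * c0) ^ 4 = 1 →
    (t * (c0 * t * c0⁻¹)) ^ 3 = 1 →
    t * (c0 ^ 2 * t * (c0 ^ 2)⁻¹) = (c0 ^ 2 * t * (c0 ^ 2)⁻¹) * t →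
    ∃ k : Fin 5, t = c0 ^ (k : ℕ) * t0 * (c0 ^ (k : ℕ))⁻¹ := by
  decide +kernel

theorem gen5 : Subgroup.closure {finRotate 5, Equiv.swap (0 : Fin 5) 1} = ⊤ := by
  have h := Equiv.Perm.closure_cycle_adjacent_swap (σ := finRotate 5)
    (isCycle_finRotate) (support_finRotate) (0 : Fin 5)
  have e : finRotate 5 0 = 1 := by decide
  rwa [e] at h

theorem rel1 : (Equiv.swap 0 1 : Equiv.Perm (Fin 5)) * Equiv.swap 0 1 = 1 := by decide +kernel
theorem rel2 : ((Equiv.swap 0 1 : Equiv.Perm (Fin 5)) * finRotate 5) ^ 4 = 1 := by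
  decide +kernel
theorem rel3 : ((Equiv.swap 0 1 : Equiv.Perm (Fin 5)) *
    (finRotate 5 * Equiv.swap 0 1 * (finRotate 5)⁻¹)) ^ 3 = 1 := by
  decide +kernel
theorem rel4 : (Equiv.swap 0 1 : Equiv.Perm (Fin 5)) *
    (finRotate 5 ^ 2 * Equiv.swap 0 1 * (finRotate 5 ^ 2)⁻¹) =
    (finRotate 5 ^ 2 * Equiv.swap 0 1 * (finRotate 5 ^ 2)⁻¹) * Equiv.swap 0 1 := by
  decide +kernel

theorem core (ψ : Equiv.Perm (Fin 5) →* Equiv.Perm (Fin 6)) (hc : ψ (finRotate 5) = c0)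
    (hm : ∃ σ, ψ σ 5 ≠ 5) :
    (∀ σ, ψ σ • O1 = O1) ∧ (∀ σ, ψ σ • O2 = O2) ∧ (∀ w ∈ W, ∃ σ, ψ σ = w) := by
  have gen : ∀ S : Subgroup (Equiv.Perm (Fin 6)), c0 ∈ S → ψ (Equiv.swap 0 1) ∈ S →
      ∀ σ, ψ σ ∈ S := by
    intro S h1 h2 σ
    have : (⊤ : Subgroup (Equiv.Perm (Fin 5))) ≤ S.comap ψ := by
      rw [← gen5, Subgroup.closure_le]
      rintro x (rfl | rfl)
      · exact (by rw [hc]; exact h1 : ψ (finRotate 5) ∈ S)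
      · exact h2
    exact this (Subgroup.mem_top σ)
  have hmove : ψ (Equiv.swap 0 1) 5 ≠ 5 := by
    intro h5
    obtain ⟨σ, hσ⟩ := hm
    exact hσ (gen (MulAction.stabilizer (Equiv.Perm (Fin 6)) (5 : Fin 6))
      (by rw [MulAction.mem_stabilizer_iff]; decide) h5 σ)
  obtain ⟨k, hk⟩ := find_t (ψ (Equiv.swap 0 1)) hmove
    (by simpa only [map_mul, map_one] using congrArg ψ rel1)
    (by simpa only [map_mul, map_one, map_pow, hc] using congrArg ψ rel2)
    (by simpa only [map_mul, map_one, map_pow, map_inv, hc] using congrArg ψ rel3)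
    (by simpa only [map_mul, map_one, map_pow, map_inv, hc] using congrArg ψ rel4)
  have inS : ∀ S : Subgroup (Equiv.Perm (Fin 6)), c0 ∈ S → t0 ∈ S → ∀ σ, ψ σ ∈ S := by
    intro S h1 h2
    refine gen S h1 ?_
    rw [hk]
    exact S.mul_mem (S.mul_mem (S.pow_mem h1 _) h2) (S.inv_mem (S.pow_mem h1 _))
  refine ⟨inS (MulAction.stabilizer _ O1) c0_O1 t0_O1,
    inS (MulAction.stabilizer _ O2) c0_O2 t0_O2, ?_⟩
  have hcr : c0 ∈ ψ.range := ⟨_, hc⟩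
  have htr : t0 ∈ ψ.range := by
    have : t0 = (c0 ^ (k : ℕ))⁻¹ * ψ (Equiv.swap 0 1) * c0 ^ (k : ℕ) := by
      rw [hk]; group
    rw [this]
    exact mul_mem (mul_mem (inv_mem (pow_mem hcr _)) ⟨_, rfl⟩) (pow_mem hcr _)
  intro w hw
  change w ∈ ψ.range
  rcases Finset.mem_union.1 hw with hw | hw
  · obtain ⟨i, -, rfl⟩ := Finset.mem_image.1 hw
    exact pow_mem hcr _
  · obtain ⟨i, -, rfl⟩ := Finset.mem_image.1 hw
    exact mul_mem (mul_mem (pow_mem hcr _) htr) (pow_mem hcr _)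

theorem conj_c0 (c : Equiv.Perm (Fin 6)) (h : orderOf c = 5) :
    ∃ g : Equiv.Perm (Fin 6), g * c0 * g⁻¹ = c := by
  have h0 : orderOf c0 = 5 := by
    have : Fact (Nat.Prime 5) := ⟨by norm_num⟩
    exact orderOf_eq_prime (by decide +kernel) (by decide +kernel)
  have cyc : ∀ d : Equiv.Perm (Fin 6), orderOf d = 5 → d.IsCycle := fun d hd =>
    Equiv.Perm.isCycle_of_prime_order' (by rw [hd]; norm_num) (by rw [hd]; simp)
  have := (cyc c0 h0).isConj (cyc c h)
    (by rw [← (cyc c0 h0).orderOf, ← (cyc c h).orderOf, h0, h])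
  exact isConj_iff.1 this

end NonstdS5

open NonstdS5 in
/-- A non-standard (i.e. transitive) subgroup S₅ ≤ S₆ acts on the 15 partitions of
{1,...,6} into three pairs with exactly two orbits, of sizes 5 and 10. -/
theorem nonstandard_S5_orbits_on_pair_partitions (H : Subgroup (Equiv.Perm (Fin 6)))
    (hiso : Nonempty (H ≃* Equiv.Perm (Fin 5)))
    (htrans : ∀ a b : Fin 6, ∃ h ∈ H, h a = b) :
    ∃ p₁ p₂ : Finset (Finset (Fin 6)), IsPairPartition p₁ ∧ IsPairPartition p₂ ∧
      {p : Finset (Finset (Fin 6)) | IsPairPartition p ∧ ∃ h ∈ H, h • p₁ = p}.ncard = 5 ∧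
      {p : Finset (Finset (Fin 6)) | IsPairPartition p ∧ ∃ h ∈ H, h • p₂ = p}.ncard = 10 ∧
      ∀ p : Finset (Finset (Fin 6)), IsPairPartition p →
        (∃ h ∈ H, h • p₁ = p) ∨ (∃ h ∈ H, h • p₂ = p) := by
  obtain ⟨e⟩ := hiso
  have ho : orderOf ((e.symm (finRotate 5) : H) : Equiv.Perm (Fin 6)) = 5 := by
    rw [Subgroup.orderOf_coe, MulEquiv.orderOf_eq]
    have : Fact (Nat.Prime 5) := ⟨by norm_num⟩
    exact orderOf_eq_prime (by decide) (by decide)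
  obtain ⟨g, hg⟩ := conj_c0 _ ho
  obtain ⟨ψ, hψ⟩ : ∃ ψ : Equiv.Perm (Fin 5) →* Equiv.Perm (Fin 6),
      ∀ σ, ψ σ = g⁻¹ * (e.symm σ : H) * g :=
    ⟨(MulAut.conj g⁻¹).toMonoidHom.comp (H.subtype.comp e.symm.toMonoidHom),
      fun σ => by simp⟩
  have hH : ∀ h ∈ H, ∃ σ, h = g * ψ σ * g⁻¹ := fun h hh =>
    ⟨e ⟨h, hh⟩, by rw [hψ, e.symm_apply_apply]; group⟩
  have hH' : ∀ σ, g * ψ σ * g⁻¹ ∈ H := fun σ => by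
    have : g * ψ σ * g⁻¹ = (e.symm σ : H) := by rw [hψ]; group
    rw [this]
    exact (e.symm σ).2
  obtain ⟨s1, s2, hW⟩ := core ψ (by rw [hψ, ← hg]; group) (by
    obtain ⟨h, hh, hab⟩ := htrans (g 5) (g 0)
    obtain ⟨σ, rfl⟩ := hH h hh
    refine ⟨σ, fun h5 => ?_⟩
    simp [h5] at hab)
  have key : ∀ (P : Finset (Finset (Fin 6))) (O : Finset (Finset (Finset (Fin 6)))),
      O = W.image (fun w => w • P) → (∀ σ, ψ σ • O = O) → P ∈ O →
      ∀ p, (∃ h ∈ H, h • (g • P) = p) ↔ p ∈ g • O := by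
    intro P O hO hs hP p
    constructor
    · rintro ⟨h, hh, rfl⟩
      obtain ⟨σ, rfl⟩ := hH h hh
      have : (g * ψ σ * g⁻¹) • g • P = g • ψ σ • P := by
        simp only [smul_smul]; congr 1; group
      rw [this]
      refine Finset.smul_mem_smul_finset ?_
      rw [← hs σ]
      exact Finset.smul_mem_smul_finset hP
    · intro hp
      obtain ⟨q, hq, rfl⟩ := Finset.mem_smul_finset.1 hp
      rw [hO] at hq
      obtain ⟨w, hw, rfl⟩ := Finset.mem_image.1 hq
      obtain ⟨σ, rfl⟩ := hW w hw
      refine ⟨_, hH' σ, ?_⟩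
      simp only [smul_smul]; congr 1; group
  have k1 := key P1 O1 rfl s1 P1_mem'
  have k2 := key P2 O2 rfl s2 P2_mem'
  have q1 := smul_pp g P1 ((mem_pps _).1 P1_mem)
  have q2 := smul_pp g P2 ((mem_pps _).1 P2_mem)
  refine ⟨g • P1, g • P2, q1, q2, ?_, ?_, ?_⟩
  · have : {p : Finset (Finset (Fin 6)) | IsPairPartition p ∧ ∃ h ∈ H, h • (g • P1) = p}
        = ((g • O1 : Finset _) : Set (Finset (Finset (Fin 6)))) := by
      ext p
      simp only [Set.mem_ofPred_eq, Finset.mem_coe, ← k1 p]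
      exact ⟨fun h => h.2, fun h => ⟨by obtain ⟨a, -, rfl⟩ := h; exact smul_pp a _ q1, h⟩⟩
    rw [this, Set.ncard_coe_finset, Finset.card_smul_finset, card_O1]
  · have : {p : Finset (Finset (Fin 6)) | IsPairPartition p ∧ ∃ h ∈ H, h • (g • P2) = p}
        = ((g • O2 : Finset _) : Set (Finset (Finset (Fin 6)))) := by
      ext p
      simp only [Set.mem_ofPred_eq, Finset.mem_coe, ← k2 p]
      exact ⟨fun h => h.2, fun h => ⟨by obtain ⟨a, -, rfl⟩ := h; exact smul_pp a _ q2, h⟩⟩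
    rw [this, Set.ncard_coe_finset, Finset.card_smul_finset, card_O2]
  · intro p hp
    rw [k1 p, k2 p]
    have h := cover (g⁻¹ • p) ((mem_pps _).2 (smul_pp _ _ hp))
    exact h.imp Finset.inv_smul_mem_iff.1 Finset.inv_smul_mem_iff.1
end
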